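/- Let α > 1, r = (1/2)(1 - 1/α), s ≥ 2, and n'_* = ⌊-log_r(s-1)⌋ + 1. If the even integer k satisfies k ≥ max{ ⌈2(1-r+r^{n'_*})^{s-2}[(1-r+r^{n'_*}) + (s-1)] / ((1-r)^{s-2}[(1-r)+(s-1)(1-r^{n'_*})]) + 2⌉·((1-r)/r)^{s-1}, 2((1-r)/r)^s, 2(1/(1-r))^{s-1} + 2 }, then for every choice of positive integers a, b with a + b = s, [0, k/2] = { ∑_{i=1}^{k/2} x_{2i-1}^a x_{2i}^b : x_j ∈ C_α }. -/

import Mathlib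

/-!
Set the variable with the larger exponent equal to `1 ∈ C`: it suffices to represent `[0, m]` by
sums of `m` powers `x ^ e` with `x ∈ C` and `e = min a b`, so that `2 * e ≤ a + b`.

If `g₁, …, g_q` have all slopes in `[d, D]` and `D * (1 - 2 * r) ≤ (q - 1) * d * r`, then the
`q - 1` other summands bridge the gap of length at most `D * (1 - 2 * r)` left by any one of them.
Hence a target between `∑ gᵢ 0` and `∑ gᵢ 1` stays within reach after each variable is confined to a
suitable piece `f₀ [0, 1]` or `f₁ [0, 1]`. The condition survives precomposition with `f₀` and `f₁`,
so this can be repeated at every level, and compactness yields a solution in `C`.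

On `f₁ [0, 1] = [1 - r, 1]` the slopes of `x ^ e` lie in `[e * (1 - r) ^ (e - 1), e]`, which gives
a number `q` such that `p ≥ q` summands cover `[p * (1 - r) ^ e, p]`. Over `q ≤ p ≤ m` these
intervals overlap to cover `[r ^ e * m, m]` when `m` is large, and `r * C ⊆ C` spreads this down
to `0`.
-/

/-- The `n`-th stage of the Cantor construction with ratio `r`:
`C_0 = [0,1]`, `C_{n+1} = f₀(C_n) ∪ f₁(C_n)` with `f₀ x = r x`, `f₁ x = r x + (1-r)`. -/
def preCantorR (r : ℝ) : ℕ → Set ℝ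
  | 0 => Set.Icc 0 1
  | n + 1 =>
      (fun x => r * x) '' preCantorR r n ∪ (fun x => r * x + (1 - r)) '' preCantorR r n

/-- The generalized Cantor set with contraction ratio `r`. -/
def cantorSetR (r : ℝ) : Set ℝ := ⋂ n, preCantorR r n

/-- The classical Cantor ternary set. -/
def cantorTernary : Set ℝ := cantorSetR (1/3)

/-- `pairSum a b m x = ∑_{i=1}^{m} x_{2i-1}^a x_{2i}^b` (0-indexed), i.e. the
non-diagonal form `f_{k,a,b}` with `k = 2m`. -/
def pairSum (a b m : ℕ) (x : ℕ → ℝ) : ℝ :=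
  ∑ i ∈ Finset.range m, x (2 * i) ^ a * x (2 * i + 1) ^ b

/-- The image `f_{k,a,b}(S^k)` with `k = 2m`. -/
def imageOn (a b m : ℕ) (S : Set ℝ) : Set ℝ :=
  {y | ∃ x : ℕ → ℝ, (∀ i, x i ∈ S) ∧ y = pairSum a b m x}

/-- `n'_* = ⌊-log_r (s-1)⌋ + 1`. -/
noncomputable def nstar' (r : ℝ) (s : ℕ) : ℤ := ⌊-Real.logb r ((s : ℝ) - 1)⌋ + 1

section PreCantor

variable {r : ℝ}

theorem preCantorR_subset_Icc (hr0 : 0 ≤ r) (hr1 : r ≤ 1) (n : ℕ) :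
    preCantorR r n ⊆ Set.Icc 0 1 := by
  induction n with
  | zero => exact subset_rfl
  | succ n ih =>
    rintro _ (⟨x, hx, rfl⟩ | ⟨x, hx, rfl⟩) <;> obtain ⟨h0, h1⟩ := ih hx <;>
      constructor <;> dsimp only <;> nlinarith

theorem antitone_preCantorR (hr0 : 0 ≤ r) (hr1 : r ≤ 1) : Antitone (preCantorR r) := by
  refine antitone_nat_of_succ_le fun n => ?_
  induction n with
  | zero => exact preCantorR_subset_Icc hr0 hr1 1
  | succ n ih => exact Set.union_subset_union (Set.image_mono ih) (Set.image_mono ih)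

theorem isCompact_preCantorR (r : ℝ) (n : ℕ) : IsCompact (preCantorR r n) := by
  induction n with
  | zero => exact isCompact_Icc
  | succ n ih => exact (ih.image (by fun_prop)).union (ih.image (by fun_prop))

theorem cantorSetR_subset_Icc : cantorSetR r ⊆ Set.Icc 0 1 :=
  Set.iInter_subset (preCantorR r) 0

theorem zero_mem_cantorSetR : (0 : ℝ) ∈ cantorSetR r := by
  refine Set.mem_iInter.2 fun n => ?_
  induction n with
  | zero => simp [preCantorR]
  | succ n ih => exact Or.inl ⟨0, ih, mul_zero r⟩

theorem one_mem_cantorSetR : (1 : ℝ) ∈ cantorSetR r := by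
  refine Set.mem_iInter.2 fun n => ?_
  induction n with
  | zero => simp [preCantorR]
  | succ n ih => exact Or.inr ⟨1, ih, by ring⟩

theorem mul_mem_cantorSetR (hr0 : 0 ≤ r) (hr1 : r ≤ 1) {x : ℝ} (hx : x ∈ cantorSetR r) :
    r * x ∈ cantorSetR r :=
  Set.mem_iInter.2 fun n =>
    antitone_preCantorR hr0 hr1 n.le_succ (Or.inl ⟨x, Set.mem_iInter.1 hx n, rfl⟩)

theorem mul_add_mem_cantorSetR (hr0 : 0 ≤ r) (hr1 : r ≤ 1) {x : ℝ} (hx : x ∈ cantorSetR r) :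
    r * x + (1 - r) ∈ cantorSetR r :=
  Set.mem_iInter.2 fun n =>
    antitone_preCantorR hr0 hr1 n.le_succ (Or.inr ⟨x, Set.mem_iInter.1 hx n, rfl⟩)

end PreCantor

/-- All difference quotients of `g` between points of `s` lie in `[d, D]`. The ratio `D / d`
measures the distortion of `g`, which governs how many summands are needed to bridge the gaps that
the Cantor construction leaves in the range of `g`. -/
def SlopesWithin (d D : ℝ) (s : Set ℝ) (g : ℝ → ℝ) : Prop :=
  ∀ ⦃u⦄, u ∈ s → ∀ ⦃v⦄, v ∈ s → u ≤ v → d * (v - u) ≤ g v - g u ∧ g v - g u ≤ D * (v - u)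

namespace SlopesWithin

variable {d D : ℝ} {s t : Set ℝ} {g : ℝ → ℝ}

theorem continuousOn (hg : SlopesWithin d D s g) : ContinuousOn g s := by
  refine (LipschitzOnWith.of_le_add_mul (max |d| |D|).toNNReal fun u hu v hv => ?_).continuousOn
  rw [Real.coe_toNNReal _ (by positivity), Real.dist_eq]
  rcases le_total u v with huv | hvu
  · have hd : -d * (v - u) ≤ max |d| |D| * (v - u) := by
      gcongr
      exact (neg_le_abs d).trans (le_max_left _ _)
    rw [abs_of_nonpos (sub_nonpos.2 huv)]
    linarith [(hg hu hv huv).1]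
  · have hD : D * (u - v) ≤ max |d| |D| * (u - v) := by
      gcongr
      exact (le_abs_self D).trans (le_max_right _ _)
    rw [abs_of_nonneg (sub_nonneg.2 hvu)]
    linarith [(hg hv hu hvu).2]

theorem comp_mul_add (hg : SlopesWithin d D t g) {c e : ℝ} (hc : 0 ≤ c)
    (hst : Set.MapsTo (fun x => c * x + e) s t) :
    SlopesWithin (c * d) (c * D) s fun x => g (c * x + e) := by
  intro u hu v hv huv
  obtain ⟨hlow, hup⟩ := hg (hst hu) (hst hv) (by dsimp only; gcongr)
  constructor <;> linarith

theorem of_deriv (hs : Convex ℝ s) (hg : Differentiable ℝ g)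
    (hd : ∀ x ∈ s, d ≤ deriv g x) (hD : ∀ x ∈ s, deriv g x ≤ D) : SlopesWithin d D s g :=
  fun u hu v hv huv =>
    ⟨hs.mul_sub_le_image_sub_of_le_deriv hg.continuous.continuousOn hg.differentiableOn
        (fun x hx => hd x (interior_subset hx)) u hu v hv huv,
      hs.image_sub_le_mul_sub_of_deriv_le hg.continuous.continuousOn hg.differentiableOn
        (fun x hx => hD x (interior_subset hx)) u hu v hv huv⟩

theorem pow_Icc {l : ℝ} (hl : 0 ≤ l) (n : ℕ) :
    SlopesWithin ((n + 1) * l ^ n) (n + 1) (Set.Icc l 1) fun x => x ^ (n + 1) := by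
  refine of_deriv (convex_Icc l 1) (by fun_prop) (fun x hx => ?_) fun x hx => ?_
  · rw [deriv_pow_field, Nat.add_sub_cancel, Nat.cast_add_one]
    gcongr
    exact hx.1
  · rw [deriv_pow_field, Nat.add_sub_cancel, Nat.cast_add_one]
    exact mul_le_of_le_one_right (by positivity) (pow_le_one₀ (hl.trans hx.1) hx.2)

end SlopesWithin

section SumsOnCantorSet

/-- Take a maximal set `S` of indices whose right pieces `[C i, D i]` keep the lower sum below `T`:
if `j ∉ S` could not be added, the widths of the other pieces make up for the gap at `j`. -/
theorem exists_piecewise_sum_le_le {ι M : Type*} [DecidableEq ι] [AddCommGroup M] [LinearOrder M]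
    [IsOrderedAddMonoid M] {I : Finset ι} {A B C D w : ι → M} {T : M}
    (hAB : ∀ i ∈ I, A i + w i ≤ B i) (hCD : ∀ i ∈ I, C i + w i ≤ D i)
    (hgap : ∀ j ∈ I, C j - B j ≤ ∑ i ∈ I.erase j, w i)
    (hA : ∑ i ∈ I, A i ≤ T) (hD : T ≤ ∑ i ∈ I, D i) :
    ∃ S : Finset ι, ∑ i ∈ I, S.piecewise C A i ≤ T ∧ T ≤ ∑ i ∈ I, S.piecewise D B i := by
  obtain ⟨S, hS, hmax⟩ :=
    (I.powerset.filter fun S => ∑ i ∈ I, S.piecewise C A i ≤ T).exists_maximal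
      ⟨∅, by simpa using hA⟩
  simp only [Finset.mem_filter, Finset.mem_powerset] at hS hmax
  obtain ⟨hSI, hST⟩ := hS
  refine ⟨S, hST, ?_⟩
  by_cases hIS : I ⊆ S
  · exact hD.trans_eq (Finset.sum_congr rfl fun i hi => by simp [hIS hi])
  obtain ⟨j, hjI, hjS⟩ := Finset.not_subset.1 hIS
  have hlt : T < ∑ i ∈ I, (insert j S).piecewise C A i := by
    by_contra! hle
    exact hjS (hmax ⟨Finset.insert_subset hjI hSI, hle⟩ (Finset.subset_insert j S)
      (Finset.mem_insert_self j S))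
  have hrest : ∑ i ∈ I.erase j, (insert j S).piecewise C A i =
      ∑ i ∈ I.erase j, S.piecewise C A i :=
    Finset.sum_congr rfl fun i hi =>
      S.piecewise_insert_of_ne C A (Finset.ne_of_mem_erase hi)
  have hwidth : ∑ i ∈ I.erase j, S.piecewise C A i + ∑ i ∈ I.erase j, w i ≤
      ∑ i ∈ I.erase j, S.piecewise D B i := by
    rw [← Finset.sum_add_distrib]
    refine Finset.sum_le_sum fun i hi => ?_
    by_cases his : i ∈ S <;> simp [his, hAB, hCD, Finset.mem_of_mem_erase hi]
  rw [← Finset.add_sum_erase I _ hjI, hrest, Finset.piecewise_insert_self] at hlt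
  rw [← Finset.add_sum_erase I _ hjI, Finset.piecewise_eq_of_notMem _ _ _ hjS]
  have hgapj := hgap j hjI
  grind

theorem exists_mem_iInter_eq_of_antitone_isCompact {X Y : Type*} [TopologicalSpace X] [T2Space X]
    [TopologicalSpace Y] [T1Space Y] {K : ℕ → Set X} {f : X → Y} {y : Y} (hK : Antitone K)
    (hKc : ∀ n, IsCompact (K n)) (hf : ContinuousOn f (K 0)) (h : ∀ n, ∃ x ∈ K n, f x = y) :
    ∃ x ∈ ⋂ n, K n, f x = y := by
  have hclosed : ∀ n, IsClosed (K n ∩ f ⁻¹' {y}) := fun n =>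
    (hf.mono (hK n.zero_le)).preimage_isClosed_of_isClosed (hKc n).isClosed isClosed_singleton
  obtain ⟨x, hx⟩ := IsCompact.nonempty_iInter_of_sequence_nonempty_isCompact_isClosed
    (fun n => K n ∩ f ⁻¹' {y}) (fun n => Set.inter_subset_inter_left _ (hK n.le_succ)) h
    ((hKc 0).of_isClosed_subset (hclosed 0) Set.inter_subset_left) hclosed
  rw [Set.mem_iInter] at hx
  exact ⟨x, Set.mem_iInter.2 fun n => (hx n).1, (hx 0).2⟩

variable {ι : Type*} {I : Finset ι} {g : ι → ℝ → ℝ} {r d D T : ℝ}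

theorem exists_offset_sum_le_le (hr0 : 0 ≤ r) (hr : r ≤ 1 / 2)
    (hgap : D * (1 - 2 * r) ≤ ((I.card : ℝ) - 1) * (d * r))
    (hg : ∀ i ∈ I, SlopesWithin d D (Set.Icc 0 1) (g i))
    (hT0 : ∑ i ∈ I, g i 0 ≤ T) (hT1 : T ≤ ∑ i ∈ I, g i 1) :
    ∃ e : ι → ℝ, (∀ i, e i = 0 ∨ e i = 1 - r) ∧
      ∑ i ∈ I, g i (e i) ≤ T ∧ T ≤ ∑ i ∈ I, g i (r + e i) := by
  classical
  have h0 : (0 : ℝ) ∈ Set.Icc 0 1 := ⟨le_rfl, zero_le_one⟩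
  have h1 : (1 : ℝ) ∈ Set.Icc 0 1 := ⟨zero_le_one, le_rfl⟩
  have hrI : r ∈ Set.Icc (0 : ℝ) 1 := ⟨hr0, by linarith⟩
  have hrI' : 1 - r ∈ Set.Icc (0 : ℝ) 1 := ⟨by linarith, by linarith⟩
  obtain ⟨S, hlo, hhi⟩ := exists_piecewise_sum_le_le (A := fun i => g i 0) (B := fun i => g i r)
    (C := fun i => g i (1 - r)) (D := fun i => g i 1) (w := fun _ => d * r)
    (fun i hi => by linarith [(hg i hi h0 hrI hr0).1])
    (fun i hi => by linarith [(hg i hi hrI' h1 (by linarith)).1])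
    (fun j hj => by
      rw [Finset.sum_const, nsmul_eq_mul, Finset.cast_card_erase_of_mem hj]
      linarith [(hg j hj hrI hrI' (by linarith)).2])
    hT0 hT1
  refine ⟨S.piecewise (fun _ => 1 - r) fun _ => 0, fun i => ?_, ?_, ?_⟩
  · by_cases hi : i ∈ S <;> simp [hi]
  · refine hlo.trans' (Finset.sum_le_sum fun i _ => ?_)
    by_cases hi : i ∈ S <;> simp [hi]
  · refine hhi.trans (Finset.sum_le_sum fun i _ => ?_)
    by_cases hi : i ∈ S <;> simp [hi]

/-- The gap condition is homogeneous in `(d, D)`, so it persists when each `g i` is precomposed with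
one of the two contractions; this is what drives the induction. -/
theorem exists_mem_preCantorR_sum_eq (hr0 : 0 ≤ r) (hr : r ≤ 1 / 2)
    (hgap : D * (1 - 2 * r) ≤ ((I.card : ℝ) - 1) * (d * r))
    (hg : ∀ i ∈ I, SlopesWithin d D (Set.Icc 0 1) (g i))
    (hT0 : ∑ i ∈ I, g i 0 ≤ T) (hT1 : T ≤ ∑ i ∈ I, g i 1) (n : ℕ) :
    ∃ x : ι → ℝ, (∀ i, x i ∈ preCantorR r n) ∧ ∑ i ∈ I, g i (x i) = T := by
  induction n generalizing g d D with
  | zero =>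
    have hcont : ContinuousOn (fun t => ∑ i ∈ I, g i t) (Set.Icc 0 1) :=
      continuousOn_finsetSum I fun i hi => (hg i hi).continuousOn
    obtain ⟨t, ht, hsum⟩ := intermediate_value_Icc zero_le_one hcont ⟨hT0, hT1⟩
    exact ⟨fun _ => t, fun _ => ht, hsum⟩
  | succ n ih =>
    obtain ⟨e, he, hlo, hhi⟩ := exists_offset_sum_le_le hr0 hr hgap hg hT0 hT1
    have hmaps : ∀ i, Set.MapsTo (fun x => r * x + e i) (Set.Icc 0 1) (Set.Icc 0 1) := by
      rintro i x ⟨hx0, hx1⟩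
      rcases he i with hi | hi <;> rw [hi] <;> constructor <;> nlinarith
    obtain ⟨x, hx, hsum⟩ := ih (g := fun i x => g i (r * x + e i)) (d := r * d) (D := r * D)
      (by linarith [mul_le_mul_of_nonneg_left hgap hr0])
      (fun i hi => (hg i hi).comp_mul_add hr0 (hmaps i)) (by simpa using hlo) (by simpa using hhi)
    refine ⟨fun i => r * x i + e i, fun i => ?_, hsum⟩
    rcases he i with hi | hi
    · exact Or.inl ⟨x i, hx i, by simp [hi]⟩
    · exact Or.inr ⟨x i, hx i, by simp [hi]⟩

theorem exists_mem_cantorSetR_sum_eq (hr0 : 0 ≤ r) (hr : r ≤ 1 / 2)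
    (hgap : D * (1 - 2 * r) ≤ ((I.card : ℝ) - 1) * (d * r))
    (hg : ∀ i ∈ I, SlopesWithin d D (Set.Icc 0 1) (g i))
    (hT0 : ∑ i ∈ I, g i 0 ≤ T) (hT1 : T ≤ ∑ i ∈ I, g i 1) :
    ∃ x : ι → ℝ, (∀ i, x i ∈ cantorSetR r) ∧ ∑ i ∈ I, g i (x i) = T := by
  have hcont : ContinuousOn (fun x : ι → ℝ => ∑ i ∈ I, g i (x i))
      (Set.univ.pi fun _ => preCantorR r 0) :=
    continuousOn_finsetSum I fun i hi =>
      (hg i hi).continuousOn.comp (continuous_apply i).continuousOn fun _ hx => hx i trivial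
  obtain ⟨x, hx, hsum⟩ := exists_mem_iInter_eq_of_antitone_isCompact
    (K := fun n => Set.univ.pi fun _ : ι => preCantorR r n)
    (fun _ _ hmn => Set.pi_mono fun _ _ => antitone_preCantorR hr0 (by linarith) hmn)
    (fun n => isCompact_univ_pi fun _ => isCompact_preCantorR r n) hcont
    fun n => by
      obtain ⟨x, hx, hsum⟩ := exists_mem_preCantorR_sum_eq hr0 hr hgap hg hT0 hT1 n
      exact ⟨x, fun i _ => hx i, hsum⟩
  rw [Set.mem_iInter] at hx
  exact ⟨x, fun i => Set.mem_iInter.2 fun n => hx n i trivial, hsum⟩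

end SumsOnCantorSet

/-- Sums of `m` terms `x ^ e` with `x ∈ S`. As in `imageOn`, the summands are the first `m` terms of
a sequence in `S`. -/
def powerSums (e m : ℕ) (S : Set ℝ) : Set ℝ :=
  {T | ∃ x : ℕ → ℝ, (∀ i, x i ∈ S) ∧ ∑ i ∈ Finset.range m, x i ^ e = T}

section PowerSums

variable {e m : ℕ} {S : Set ℝ}

theorem zero_mem_powerSums (he : e ≠ 0) (hS : 0 ∈ S) : 0 ∈ powerSums e m S :=
  ⟨fun _ => 0, fun _ => hS, by simp [he]⟩

theorem powerSums_mono_left (he : e ≠ 0) (hS : 0 ∈ S) {q : ℕ} (hqm : q ≤ m) :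
    powerSums e q S ⊆ powerSums e m S := by
  rintro _ ⟨x, hx, rfl⟩
  refine ⟨fun i => if i < q then x i else 0, fun i => ?_, ?_⟩
  · dsimp only
    split_ifs
    exacts [hx i, hS]
  · rw [← Finset.sum_subset (Finset.range_subset_range.2 hqm) fun i _ hi => by simp_all]
    exact Finset.sum_congr rfl fun i hi => by simp [Finset.mem_range.1 hi]

theorem pow_mul_mem_powerSums {c : ℝ} (hc : ∀ x ∈ S, c * x ∈ S) {T : ℝ}
    (hT : T ∈ powerSums e m S) : c ^ e * T ∈ powerSums e m S := by
  obtain ⟨x, hx, rfl⟩ := hT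
  exact ⟨fun i => c * x i, fun i => hc _ (hx i), by simp only [mul_pow, Finset.mul_sum]⟩

theorem mem_imageOn_iff {a b : ℕ} {T : ℝ} :
    T ∈ imageOn a b m S ↔ ∃ u v : ℕ → ℝ, (∀ i, u i ∈ S) ∧ (∀ i, v i ∈ S) ∧
      ∑ i ∈ Finset.range m, u i ^ a * v i ^ b = T := by
  constructor
  · rintro ⟨x, hx, rfl⟩
    exact ⟨fun i => x (2 * i), fun i => x (2 * i + 1), fun _ => hx _, fun _ => hx _, rfl⟩
  · rintro ⟨u, v, hu, hv, rfl⟩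
    refine ⟨fun i => if Even i then u (i / 2) else v (i / 2), fun i => ?_, ?_⟩
    · dsimp only
      split_ifs
      exacts [hu _, hv _]
    · refine Finset.sum_congr rfl fun i _ => ?_
      simp [Nat.mul_add_div]

theorem powerSums_min_subset_imageOn (a b : ℕ) (hS : 1 ∈ S) :
    powerSums (min a b) m S ⊆ imageOn a b m S := by
  rintro T ⟨x, hx, rfl⟩
  rw [mem_imageOn_iff]
  rcases min_choice a b with h | h <;> rw [h]
  · exact ⟨x, fun _ => 1, hx, fun _ => hS, by simp only [one_pow, mul_one]⟩
  · exact ⟨fun _ => 1, x, fun _ => hS, hx, by simp only [one_pow, one_mul]⟩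

theorem imageOn_subset_Icc (a b : ℕ) (hS : S ⊆ Set.Icc 0 1) :
    imageOn a b m S ⊆ Set.Icc (0 : ℝ) m := by
  intro T hT
  obtain ⟨u, v, hu, hv, rfl⟩ := mem_imageOn_iff.1 hT
  have hterm : ∀ i, u i ^ a * v i ^ b ∈ Set.Icc (0 : ℝ) 1 := fun i =>
    mul_mem (S := Submonoid ℝ) (s := unitInterval.submonoid)
      (pow_mem (hS (hu i)) a) (pow_mem (hS (hv i)) b)
  refine ⟨Finset.sum_nonneg fun i _ => (hterm i).1, ?_⟩
  simpa using Finset.sum_le_card_nsmul (Finset.range m) _ 1 fun i _ => (hterm i).2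

end PowerSums

theorem Icc_subset_of_mul_mem {P : Set ℝ} {c M : ℝ} (hc0 : 0 < c) (hc1 : c < 1) (h0 : 0 ∈ P)
    (hP : ∀ T ∈ P, c * T ∈ P) (htop : Set.Icc (c * M) M ⊆ P) : Set.Icc 0 M ⊆ P := by
  have hpow : ∀ N : ℕ, ∀ T ∈ P, c ^ N * T ∈ P := by
    intro N T hT
    induction N with
    | zero => simpa using hT
    | succ N ih => simpa only [pow_succ', mul_assoc] using hP _ ih
  rintro T ⟨hT0, hTM⟩
  rcases hT0.eq_or_lt with rfl | hT0
  · exact h0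
  have hM : 0 < M := hT0.trans_le hTM
  obtain ⟨N, hlow, hup⟩ :=
    exists_nat_pow_near_of_lt_one (div_pos hT0 hM) ((div_le_one hM).2 hTM) hc0 hc1
  have hcN : 0 < c ^ N := pow_pos hc0 N
  rw [lt_div_iff₀ hM] at hlow
  rw [div_le_iff₀ hM] at hup
  have hmem : T / c ^ N ∈ P := htop
    ⟨by rw [le_div_iff₀ hcN]; linear_combination hlow.le, by rw [div_le_iff₀ hcN]; linarith⟩
  simpa only [mul_div_cancel₀ _ hcN.ne'] using hpow N _ hmem

/-- The intervals `[p * l, p]` with `p ≥ q` overlap consecutively. -/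
theorem exists_nat_mul_le_le {q m : ℕ} {l T : ℝ} (hq : (q + 1) * l ≤ q) (hqT : q * l ≤ T)
    (hTm : T ≤ m) (hqm : q ≤ m) : ∃ p : ℕ, q ≤ p ∧ p ≤ m ∧ p * l ≤ T ∧ T ≤ p := by
  by_cases hTq : T ≤ q
  · exact ⟨q, le_rfl, hqm, hqT, hTq⟩
  rw [not_le] at hTq
  have hq0 : (0 : ℝ) ≤ q := q.cast_nonneg
  have hl : l ≤ 1 := by
    by_contra! hl
    nlinarith
  refine ⟨⌈T⌉₊, (Nat.lt_ceil.2 hTq).le, Nat.ceil_le.2 hTm, ?_, Nat.le_ceil T⟩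
  have hceil : (⌈T⌉₊ : ℝ) < T + 1 := Nat.ceil_lt_add_one (hq0.trans hTq.le)
  have hceil' : (q : ℝ) + 1 ≤ ⌈T⌉₊ := by exact_mod_cast Nat.lt_ceil.2 hTq
  nlinarith [mul_le_mul_of_nonneg_right hceil' (sub_nonneg.2 hl)]

section PowerSumsOnCantorSet

variable {r : ℝ} {n m : ℕ}

theorem Icc_subset_powerSums_one (hr0 : 0 ≤ r) (hr : r ≤ 1 / 2) (hm : 1 - r ≤ m * r) :
    Set.Icc 0 (m : ℝ) ⊆ powerSums 1 m (cantorSetR r) := by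
  rintro T ⟨hT0, hT1⟩
  obtain ⟨x, hx, hsum⟩ := exists_mem_cantorSetR_sum_eq (I := Finset.range m) (g := fun _ x => x)
    (d := 1) (D := 1) hr0 hr (by rw [Finset.card_range]; linarith)
    (fun _ _ u _ v _ _ => by constructor <;> linarith) (by simpa using hT0) (by simpa using hT1)
  exact ⟨x, hx, by simpa using hsum⟩

theorem Icc_mul_pow_subset_powerSums (hr0 : 0 ≤ r) (hr : r ≤ 1 / 2)
    (hm : 1 - 2 * r ≤ ((m : ℝ) - 1) * (r * (1 - r) ^ n)) :
    Set.Icc (m * (1 - r) ^ (n + 1)) m ⊆ powerSums (n + 1) m (cantorSetR r) := by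
  rintro T ⟨hT0, hT1⟩
  have hmaps : Set.MapsTo (fun x => r * x + (1 - r)) (Set.Icc 0 1) (Set.Icc (1 - r) 1) := by
    rintro x ⟨hx0, hx1⟩
    constructor <;> nlinarith
  obtain ⟨x, hx, hsum⟩ := exists_mem_cantorSetR_sum_eq (I := Finset.range m)
    (g := fun _ x => (r * x + (1 - r)) ^ (n + 1)) hr0 hr
    (by
      rw [Finset.card_range]
      have hn : (0 : ℝ) ≤ r * (n + 1) := by positivity
      linarith [mul_le_mul_of_nonneg_left hm hn])
    (fun _ _ => (SlopesWithin.pow_Icc (by linarith) n).comp_mul_add hr0 hmaps)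
    (by simpa using hT0) (by simpa using hT1)
  exact ⟨fun i => r * x i + (1 - r), fun i => mul_add_mem_cantorSetR hr0 (by linarith) (hx i), hsum⟩

theorem Icc_subset_powerSums_cantorSetR (hr0 : 0 < r) (hr : r ≤ 1 / 2) {q : ℕ}
    (hq : 1 - 2 * r ≤ ((q : ℝ) - 1) * (r * (1 - r) ^ n))
    (hqm : q * (1 - r) ^ (n + 1) ≤ m * r ^ (n + 1)) :
    Set.Icc 0 (m : ℝ) ⊆ powerSums (n + 1) m (cantorSetR r) := by
  have h1r : 0 < 1 - r := by linarith
  have hpow : (1 - r) ^ n ≤ 1 := pow_le_one₀ h1r.le (by linarith)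
  have hqr : 1 - r ≤ q * r := by
    have hq1 : (0 : ℝ) ≤ (q : ℝ) - 1 := by
      by_contra! hneg
      have hprod : ((q : ℝ) - 1) * (r * (1 - r) ^ n) < 0 :=
        mul_neg_of_neg_of_pos hneg (by positivity)
      linarith
    have hle : ((q : ℝ) - 1) * (r * (1 - r) ^ n) ≤ ((q : ℝ) - 1) * (r * 1) := by gcongr
    linarith
  have hoverlap : ((q : ℝ) + 1) * (1 - r) ^ (n + 1) ≤ q := by
    have hle : ((q : ℝ) + 1) * ((1 - r) ^ n * (1 - r)) ≤ (q + 1) * (1 * (1 - r)) := by gcongr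
    rw [pow_succ]
    linarith
  have hle_m : q ≤ m := by
    have hle : (q : ℝ) * (1 - r) ^ (n + 1) ≤ m * (1 - r) ^ (n + 1) :=
      hqm.trans (by gcongr; linarith)
    exact_mod_cast le_of_mul_le_mul_right hle (by positivity)
  refine Icc_subset_of_mul_mem (c := r ^ (n + 1)) (by positivity)
    (pow_lt_one₀ hr0.le (by linarith) n.succ_ne_zero)
    (zero_mem_powerSums n.succ_ne_zero zero_mem_cantorSetR)
    (fun T => pow_mul_mem_powerSums fun x => mul_mem_cantorSetR hr0.le (by linarith)) ?_
  rintro T ⟨hT0, hTm⟩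
  obtain ⟨p, hqp, hpm, hpT, hTp⟩ := exists_nat_mul_le_le hoverlap (by linarith) hTm hle_m
  have hp : 1 - 2 * r ≤ ((p : ℝ) - 1) * (r * (1 - r) ^ n) := hq.trans (by gcongr)
  exact powerSums_mono_left n.succ_ne_zero zero_mem_cantorSetR hpm
    (Icc_mul_pow_subset_powerSums hr0.le hr hp ⟨hpT, hTp⟩)

end PowerSumsOnCantorSet

section Thresholds

theorem mul_one_add_pow_le_div_pow {t : ℝ} (ht : 1 ≤ t) (h : t ^ 2 ≤ 1 + t) (n : ℕ) :
    t * (1 + t) ^ n ≤ ((1 + t) / t) ^ (2 * n + 1) := by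
  have ht0 : 0 < t := by linarith
  have hle : t ≤ (1 + t) / t := by
    rw [le_div_iff₀ ht0]
    linarith
  have hle_sq : 1 + t ≤ ((1 + t) / t) ^ 2 := by
    rw [div_pow, le_div_iff₀ (by positivity)]
    nlinarith
  calc t * (1 + t) ^ n ≤ (1 + t) / t * (((1 + t) / t) ^ 2) ^ n := by gcongr
    _ = ((1 + t) / t) ^ (2 * n + 1) := by rw [← pow_mul, pow_succ']

theorem threshold_le_of_one_add_pow_le {t : ℝ} {n : ℕ} (ht : 1 ≤ t)
    (h : (1 + t) ^ n ≤ t ^ (2 * n)) :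
    2 * t ^ (n + 2) + (t - 1) * t * (1 + t) ^ (n + 1) ≤ 2 * t ^ (2 * n + 3) := by
  have : 0 < t := by linarith
  have hlow : 2 * t * t ^ (n + 1) ≤ (t ^ 2 + 1) * t ^ (2 * n + 1) := by
    gcongr
    · linarith [sq_nonneg (t - 1)]
    · omega
  have hhigh : (t ^ 2 - 1) * t * (1 + t) ^ n ≤ (t ^ 2 - 1) * t * t ^ (2 * n) := by
    have : 0 ≤ t ^ 2 - 1 := by nlinarith
    gcongr
  linear_combination hlow + hhigh

theorem threshold_le_of_sq_le_one_add {t M : ℝ} {n : ℕ} (ht : 1 ≤ t) (h : t ^ 2 ≤ 1 + t)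
    (h₁ : 2 * t ^ (2 * n + 5) ≤ M) (h₂ : ((1 + t) / t) ^ (2 * n + 5) ≤ M) :
    2 * t ^ (n + 3) + (t - 1) * t * (1 + t) ^ (n + 2) ≤ M := by
  have : 0 < t := by linarith
  have hM : 0 ≤ M := h₁.trans' (by positivity)
  have hfirst : 2 * t ^ (n + 3) ≤ M / t ^ 2 := by
    rw [le_div_iff₀ (by positivity), mul_assoc, ← pow_add]
    have hpow : t ^ (n + 3 + 2) ≤ t ^ (2 * n + 5) := pow_le_pow_right₀ ht (by omega)
    linarith
  have hsecond : (t - 1) * (t * (1 + t) ^ (n + 2)) ≤ (t - 1) * M := by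
    have := sub_nonneg.2 ht
    gcongr
    exact (mul_one_add_pow_le_div_pow ht h (n + 2)).trans h₂
  have hcoeff : 1 / t ^ 2 + (t - 1) ≤ 1 := by
    rw [div_add' _ _ _ (by positivity), div_le_one (by positivity)]
    nlinarith [mul_nonneg (sub_nonneg.2 ht) (sub_nonneg.2 h)]
  calc 2 * t ^ (n + 3) + (t - 1) * t * (1 + t) ^ (n + 2) ≤ M / t ^ 2 + (t - 1) * M := by
        linarith
    _ = (1 / t ^ 2 + (t - 1)) * M := by ring
    _ ≤ M := mul_le_of_le_one_left hM hcoeff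

/-- For `t = (1 - r) / r` and `e = n + 2`, the bounded expression is `t ^ e * (2 + K)`, where
`1 + K = 1 + (1 - 2 * r) / (r * (1 - r) ^ (e - 1))` summands `x ^ e` on `[1 - r, 1]` are enough to
bridge the gaps, and rounding up costs at most one more. -/
theorem threshold_le {t M : ℝ} {n : ℕ} (ht : 1 ≤ t) (h₁ : 2 * t ^ (2 * n + 3) ≤ M)
    (h₂ : ((1 + t) / t) ^ (2 * n + 3) ≤ M) :
    2 * t ^ (n + 2) + (t - 1) * t * (1 + t) ^ (n + 1) ≤ M := by
  rcases le_total (1 + t) (t ^ 2) with h | h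
  · refine (threshold_le_of_one_add_pow_le ht ?_).trans h₁
    rw [pow_mul]
    gcongr
  · cases n with
    | zero => exact (threshold_le_of_one_add_pow_le ht (by simp)).trans h₁
    | succ n => exact threshold_le_of_sq_le_one_add ht h h₁ h₂

theorem exists_nat_gap_le_of_threshold_le {r t M : ℝ} (hr0 : 0 < r) (hr : r ≤ 1 / 2)
    (ht : t = (1 - r) / r) (n : ℕ)
    (hM : 2 * t ^ (n + 1) + (t - 1) * t * (1 + t) ^ n ≤ M) :
    ∃ q : ℕ, 1 - 2 * r ≤ ((q : ℝ) - 1) * (r * (1 - r) ^ n) ∧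
      q * (1 - r) ^ (n + 1) ≤ M * r ^ (n + 1) := by
  have h1r : 0 < 1 - r := by linarith
  set K := (1 - 2 * r) / (r * (1 - r) ^ n) with hK
  have hK0 : 0 ≤ K := div_nonneg (by linarith) (by positivity)
  have hthreshold : (2 + K) * (1 - r) ^ (n + 1) =
      (2 * t ^ (n + 1) + (t - 1) * t * (1 + t) ^ n) * r ^ (n + 1) := by
    have h1t : 1 + t = 1 / r := by rw [ht]; field_simp; ring
    rw [h1t, hK, ht, div_pow, div_pow, one_pow]
    field_simp
    ring
  refine ⟨⌈1 + K⌉₊, ?_, ?_⟩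
  · rw [← div_le_iff₀ (by positivity)]
    linarith [Nat.le_ceil (1 + K)]
  · calc (⌈1 + K⌉₊ : ℝ) * (1 - r) ^ (n + 1) ≤ (2 + K) * (1 - r) ^ (n + 1) := by
          gcongr
          linarith [Nat.ceil_lt_add_one (a := 1 + K) (by linarith)]
      _ ≤ M * r ^ (n + 1) := by
          rw [hthreshold]
          gcongr

end Thresholds

theorem Icc_subset_powerSums_of_le {r : ℝ} (hr0 : 0 < r) (hr : r ≤ 1 / 2) {e m : ℕ} (he : 0 < e)
    (h₁ : 2 * ((1 - r) / r) ^ (2 * e - 1) ≤ m) (h₂ : (1 / (1 - r)) ^ (2 * e - 1) ≤ m) :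
    Set.Icc 0 (m : ℝ) ⊆ powerSums e m (cantorSetR r) := by
  have ht : 1 ≤ (1 - r) / r := by
    rw [one_le_div hr0]
    linarith
  obtain rfl | ⟨n, rfl⟩ : e = 1 ∨ ∃ n, e = n + 2 := by
    rcases e with _ | _ | n <;> simp_all
  · refine Icc_subset_powerSums_one hr0.le hr ?_
    rw [← div_le_iff₀ hr0]
    rw [Nat.mul_one, pow_one] at h₁
    linarith
  · have hinv : 1 / (1 - r) = (1 + (1 - r) / r) / ((1 - r) / r) := by
      have : 1 - r ≠ 0 := by linarith
      field_simp
      ring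
    rw [hinv] at h₂
    obtain ⟨q, hq, hqm⟩ :=
      exists_nat_gap_le_of_threshold_le hr0 hr rfl (n + 1) (threshold_le ht h₁ h₂)
    exact Icc_subset_powerSums_cantorSetR hr0 hr hq hqm

theorem stmt_15_general {r : ℝ} (hr0 : 0 < r) (hr : r ≤ 1 / 2) {a b k : ℕ} (ha : 0 < a) (hb : 0 < b)
    (hk : Even k) (h₁ : 4 * ((1 - r) / r) ^ (2 * min a b - 1) ≤ k)
    (h₂ : 2 * (1 / (1 - r)) ^ (2 * min a b - 1) ≤ k) :
    Set.Icc (0 : ℝ) ((k : ℝ) / 2) = imageOn a b (k / 2) (cantorSetR r) := by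
  have hk' : ((k / 2 : ℕ) : ℝ) = k / 2 := Nat.cast_div_charZero hk.two_dvd
  rw [← hk']
  refine Set.Subset.antisymm ?_ (imageOn_subset_Icc a b cantorSetR_subset_Icc)
  exact (Icc_subset_powerSums_of_le hr0 hr (lt_min ha hb) (by linarith) (by linarith)).trans
    (powerSums_min_subset_imageOn a b one_mem_cantorSetR)

theorem nstar'_nonneg {r : ℝ} (hr0 : 0 < r) (hr1 : r < 1) {s : ℕ} (hs : 2 ≤ s) :
    0 ≤ nstar' r s := by
  have hs' : (2 : ℝ) ≤ s := by exact_mod_cast hs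
  have hlog : Real.logb r ((s : ℝ) - 1) ≤ 0 :=
    (Real.logb_nonpos_iff_of_base_lt_one hr0 hr1 (by linarith)).2 (by linarith)
  exact add_nonneg (Int.floor_nonneg.2 (neg_nonneg.2 hlog)) zero_le_one

theorem four_le_ceil_distortion_quotient {l ε c : ℝ} (hl : 0 < l) (hε0 : 0 ≤ ε) (hε1 : ε ≤ 1)
    (hc : 0 ≤ c) (n : ℕ) :
    4 ≤ ⌈2 * ((l + ε) ^ n * (l + ε + c)) / (l ^ n * (l + c * (1 - ε))) + 2⌉ := by
  have : 0 ≤ 1 - ε := sub_nonneg.2 hε1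
  have hle : l ^ n * (l + c * (1 - ε)) ≤ (l + ε) ^ n * (l + ε + c) := by
    gcongr
    · linarith
    · linarith
    · exact mul_le_of_le_one_right hc (by linarith)
  have hquot : 2 ≤ 2 * ((l + ε) ^ n * (l + ε + c)) / (l ^ n * (l + c * (1 - ε))) := by
    rw [le_div_iff₀ (by positivity)]
    linarith
  rw [Int.le_ceil_iff]
  push_cast
  linarith

theorem four_mul_pow_le_ceil_mul_pow {r : ℝ} (hr0 : 0 < r) (hr : r ≤ 1 / 2) {s j : ℕ} (hs : 2 ≤ s)
    (hj : j ≤ s - 1) :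
    4 * ((1 - r) / r) ^ j ≤
      ⌈2 * ((1 - r + r ^ nstar' r s) ^ (s - 2) * ((1 - r + r ^ nstar' r s) + ((s : ℝ) - 1))) /
        ((1 - r) ^ (s - 2) * ((1 - r) + ((s : ℝ) - 1) * (1 - r ^ nstar' r s))) + 2⌉ *
        ((1 - r) / r) ^ (s - 1) := by
  have hs' : (2 : ℝ) ≤ s := by exact_mod_cast hs
  have ht : 1 ≤ (1 - r) / r := by
    rw [one_le_div hr0]
    linarith
  have hceil := four_le_ceil_distortion_quotient (l := 1 - r) (c := (s : ℝ) - 1) (by linarith)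
    (zpow_pos hr0 (nstar' r s)).le
    (zpow_le_one₀ hr0 (by linarith) (nstar'_nonneg hr0 (by linarith) hs)) (by linarith) (s - 2)
  exact mul_le_mul (by exact_mod_cast Int.cast_le (R := ℝ).2 hceil) (pow_le_pow_right₀ ht hj)
    (by positivity) (by positivity)

/-- Uniform version: one `k` works simultaneously for all decompositions `s = a + b`. -/
theorem stmt_15 (α r : ℝ) (hα : 1 < α) (hr : r = (1 - 1/α) / 2)
    (s : ℕ) (hs : 2 ≤ s) (k : ℕ) (hk : Even k) (hkpos : 0 < k)
    (hkge : (k : ℝ) ≥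
      max (max
        ((⌈2 * ((1 - r + r ^ nstar' r s) ^ (s - 2) *
              ((1 - r + r ^ nstar' r s) + ((s : ℝ) - 1))) /
            ((1 - r) ^ (s - 2) *
              ((1 - r) + ((s : ℝ) - 1) * (1 - r ^ nstar' r s))) + 2⌉ : ℤ) *
          ((1 - r) / r) ^ (s - 1))
        (2 * ((1 - r) / r) ^ s))
        (2 * (1 / (1 - r)) ^ (s - 1) + 2)) :
    ∀ a b : ℕ, 0 < a → 0 < b → a + b = s →
      Set.Icc (0 : ℝ) ((k : ℝ) / 2) = imageOn a b (k / 2) (cantorSetR r) := by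
  rintro a b ha hb rfl
  have hαinv : 1 / α < 1 := (div_lt_one (by linarith)).2 hα
  have hr0 : 0 < r := by linarith
  have hr1 : r ≤ 1 / 2 := by linarith [one_div_pos.2 (zero_lt_one.trans hα)]
  have hexp : 2 * min a b - 1 ≤ a + b - 1 := by omega
  have hinv : (1 / (1 - r)) ^ (2 * min a b - 1) ≤ (1 / (1 - r)) ^ (a + b - 1) :=
    pow_le_pow_right₀ ((one_le_div (by linarith)).2 (by linarith)) hexp
  obtain ⟨⟨hk₁, -⟩, hk₂⟩ := by simpa only [ge_iff_le, max_le_iff] using hkge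
  exact stmt_15_general hr0 hr1 ha hb hk
    ((four_mul_pow_le_ceil_mul_pow hr0 hr1 hs hexp).trans hk₁) (by linarith)
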